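/- arXiv:1603.07890 — 2 statements merged into one kernel-verified Lean document; each statement's English description precedes it below -/
import Mathlib

section
/- The set 𝒫 of all polynomial functions on ℝⁿ, regarded as tempered distributions (via f ↦ (φ ↦ ∫_{ℝⁿ} f(x) φ(x) dx)), is a closed linear subspace of the space 𝒮′(ℝⁿ) of tempered distributions equipped with the weak-* topology. -/
open MeasureTheory

/-!
A polynomial distribution kills every Schwartz function all of whose moments vanish, and the
functionals that kill all these functions form a weak-* closed set. So it suffices that each such
functional `T` is a polynomial. Composing `T` with the inverse Fourier transform gives a functional
supported at the origin: if `𝓕 φ` vanishes near `0`, so do all its derivatives, and these are up to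
constants the moments of `φ`. A functional supported at the origin has finite order `N`, that is, it
kills the functions whose derivatives up to order `N` vanish at `0`. Translating back, `T` kills the
common kernel of the finitely many moments of order at most `N`, hence is a combination of them.
-/

section FiniteOrder

open Set Filter Metric SchwartzMap Distribution
open scoped Topology

variable {𝕜 E F V : Type*} [NormedAddCommGroup E] [NormedSpace ℝ E]
  [NormedAddCommGroup F] [NormedSpace ℝ F]

theorem norm_iteratedFDeriv_le_mul_pow_of_iteratedFDeriv_eq_zero {f : E → F} {a : E} {N : ℕ}
    {r A : ℝ} (hf : ContDiff ℝ (N + 1) f) (hzero : ∀ j ≤ N, iteratedFDeriv ℝ j f a = 0)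
    (hA : ∀ y ∈ closedBall a r, ‖iteratedFDeriv ℝ (N + 1) f y‖ ≤ A) {i j : ℕ}
    (hij : j + i = N + 1) {x : E} (hx : x ∈ closedBall a r) :
    ‖iteratedFDeriv ℝ j f x‖ ≤ A * ‖x - a‖ ^ i := by
  induction i generalizing j x with
  | zero =>
    obtain rfl : j = N + 1 := hij
    simpa using hA x hx
  | succ i ih =>
    have hA_nonneg : 0 ≤ A := (norm_nonneg _).trans (hA x hx)
    have hdiff : Differentiable ℝ (iteratedFDeriv ℝ j f) :=
      hf.differentiable_iteratedFDeriv (mod_cast (by omega : j < N + 1))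
    have hbound : ∀ y ∈ closedBall a ‖x - a‖,
        ‖fderiv ℝ (iteratedFDeriv ℝ j f) y‖ ≤ A * ‖x - a‖ ^ i := by
      intro y hy
      have hya : ‖y - a‖ ≤ ‖x - a‖ := mem_closedBall_iff_norm.1 hy
      have hyr : y ∈ closedBall a r :=
        mem_closedBall_iff_norm.2 (hya.trans (mem_closedBall_iff_norm.1 hx))
      rw [norm_fderiv_iteratedFDeriv]
      exact (ih (by omega) hyr).trans (by gcongr)
    have hmean := (convex_closedBall a ‖x - a‖).norm_image_sub_le_of_norm_fderiv_le
      (fun y _ ↦ hdiff y) hbound (mem_closedBall_self (norm_nonneg _))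
      (mem_closedBall_iff_norm.2 le_rfl)
    rwa [hzero j (by omega), sub_zero, mul_assoc, ← pow_succ] at hmean

theorem norm_pow_mul_norm_iteratedFDeriv_comp_smul_le (χ : 𝓢(E, F)) {c : ℝ} (hc : 0 < c)
    (k i : ℕ) (x : E) :
    ‖x‖ ^ k * ‖iteratedFDeriv ℝ i (fun y ↦ χ (c • y)) x‖ ≤
      c ^ i / c ^ k * SchwartzMap.seminorm ℝ k i χ := by
  calc
    _ = c ^ i / c ^ k * (‖c • x‖ ^ k * ‖iteratedFDeriv ℝ i χ (c • x)‖) := by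
      rw [iteratedFDeriv_comp_const_smul _ (χ.smooth i), norm_smul, norm_smul, norm_pow,
        Real.norm_of_nonneg hc.le, mul_pow]
      field_simp
    _ ≤ _ := by
      gcongr
      exact χ.le_seminorm ℝ k i (c • x)

theorem norm_pow_mul_norm_iteratedFDeriv_comp_inv_smul_mul_le
    [NormedAddCommGroup V] [NormedSpace ℝ V] (χ : 𝓢(E, V))
    {f : 𝓢(E, F)} {N : ℕ} (hf : ∀ j ≤ N, iteratedFDeriv ℝ j f 0 = 0) (k : ℕ) {i m : ℕ}
    (him : i + m ≤ N) {ε : ℝ} (hε : ε ∈ Ioc 0 1) (x : E) :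
    ‖x‖ ^ k * (‖iteratedFDeriv ℝ i (fun y ↦ χ (ε⁻¹ • y)) x‖ * ‖iteratedFDeriv ℝ m f x‖) ≤
      SchwartzMap.seminorm ℝ 0 (N + 1) f *
        SchwartzMap.seminorm ℝ (k + (N + 1 - m)) i χ * ε := by
  obtain ⟨hε_pos, hε_le⟩ := hε
  set M := N + 1 - m
  set A := SchwartzMap.seminorm ℝ 0 (N + 1) f
  set K := SchwartzMap.seminorm ℝ (k + M) i χ
  have hflat : ‖iteratedFDeriv ℝ m f x‖ ≤ A * ‖x‖ ^ M := by
    simpa using norm_iteratedFDeriv_le_mul_pow_of_iteratedFDeriv_eq_zero (f.smooth _) hf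
      (fun y _ ↦ f.norm_iteratedFDeriv_le_seminorm ℝ (N + 1) y)
      (show m + M = N + 1 by omega) (mem_closedBall_iff_norm.2 le_rfl)
  have hpow : ε⁻¹ ^ i / ε⁻¹ ^ (k + M) ≤ ε := by
    obtain ⟨d, hd⟩ : ∃ d, k + M = i + (d + 1) := ⟨k + M - i - 1, by omega⟩
    calc
      ε⁻¹ ^ i / ε⁻¹ ^ (k + M) = ε ^ d * ε := by
        rw [hd, pow_add, div_mul_cancel_left₀ (by positivity), inv_pow, inv_inv, pow_succ]
      _ ≤ ε := mul_le_of_le_one_left hε_pos.le (pow_le_one₀ hε_pos.le hε_le)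
  calc
    _ ≤ ‖x‖ ^ k * (‖iteratedFDeriv ℝ i (fun y ↦ χ (ε⁻¹ • y)) x‖ * (A * ‖x‖ ^ M)) := by gcongr
    _ = A * (‖x‖ ^ (k + M) * ‖iteratedFDeriv ℝ i (fun y ↦ χ (ε⁻¹ • y)) x‖) := by ring
    _ ≤ A * (ε⁻¹ ^ i / ε⁻¹ ^ (k + M) * K) := mul_le_mul_of_nonneg_left
      (norm_pow_mul_norm_iteratedFDeriv_comp_smul_le χ (inv_pos.2 hε_pos) _ i x)
      (apply_nonneg _ _)
    _ ≤ A * (ε * K) := by gcongr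
    _ = A * K * ε := by ring

theorem hasTemperateGrowth_comp_smul (χ : 𝓢(E, F)) (c : ℝ) :
    (fun x ↦ χ (c • x)).HasTemperateGrowth :=
  χ.hasTemperateGrowth.comp (c • ContinuousLinearMap.id ℝ E).hasTemperateGrowth

variable [RCLike 𝕜] [NormedSpace 𝕜 F]

theorem exists_forall_seminorm_smulLeftCLM_comp_inv_smul_le (χ : 𝓢(E, 𝕜)) {f : 𝓢(E, F)} {N : ℕ}
    (hf : ∀ j ≤ N, iteratedFDeriv ℝ j f 0 = 0) (k : ℕ) {l : ℕ} (hl : l ≤ N) :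
    ∃ C : ℝ, ∀ ε ∈ Ioc (0 : ℝ) 1,
      SchwartzMap.seminorm 𝕜 k l (smulLeftCLM F (fun x ↦ χ (ε⁻¹ • x)) f) ≤ C * ε := by
  set A := SchwartzMap.seminorm ℝ 0 (N + 1) f
  set K : ℕ → ℝ := fun i ↦ SchwartzMap.seminorm ℝ (k + (N + 1 - (l - i))) i χ
  refine ⟨∑ i ∈ Finset.range (l + 1), l.choose i * (A * K i), fun ε hε ↦ ?_⟩
  have hε_nonneg : 0 ≤ ε := hε.1.le
  refine seminorm_le_bound 𝕜 k l _ (by positivity) fun x ↦ ?_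
  have hχ : ContDiff ℝ l (fun y ↦ χ (ε⁻¹ • y)) := (χ.smooth l).comp (contDiff_const_smul ε⁻¹)
  rw [smulLeftCLM_apply (hasTemperateGrowth_comp_smul χ ε⁻¹)]
  calc
    _ ≤ ‖x‖ ^ k * ∑ i ∈ Finset.range (l + 1), l.choose i *
        ‖iteratedFDeriv ℝ i (fun y ↦ χ (ε⁻¹ • y)) x‖ * ‖iteratedFDeriv ℝ (l - i) f x‖ := by
      gcongr
      exact norm_iteratedFDeriv_smul_le hχ (f.smooth l) x le_rfl
    _ = ∑ i ∈ Finset.range (l + 1), l.choose i * (‖x‖ ^ k *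
        (‖iteratedFDeriv ℝ i (fun y ↦ χ (ε⁻¹ • y)) x‖ * ‖iteratedFDeriv ℝ (l - i) f x‖)) := by
      rw [Finset.mul_sum]
      exact Finset.sum_congr rfl fun i _ ↦ by ring
    _ ≤ ∑ i ∈ Finset.range (l + 1), l.choose i * (A * K i * ε) := by
      refine Finset.sum_le_sum fun i hi ↦ mul_le_mul_of_nonneg_left ?_ (Nat.cast_nonneg _)
      have hiN : i + (l - i) ≤ N := by have := Finset.mem_range_succ_iff.1 hi; omega
      exact norm_pow_mul_norm_iteratedFDeriv_comp_inv_smul_mul_le χ hf k hiN hε x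
    _ = (∑ i ∈ Finset.range (l + 1), l.choose i * (A * K i)) * ε := by
      simp only [Finset.sum_mul, mul_assoc]

theorem tendsto_seminorm_smulLeftCLM_comp_inv_smul (χ : 𝓢(E, 𝕜)) {f : 𝓢(E, F)} {N : ℕ}
    (hf : ∀ j ≤ N, iteratedFDeriv ℝ j f 0 = 0) (k : ℕ) {l : ℕ} (hl : l ≤ N) :
    Tendsto (fun ε : ℝ ↦ SchwartzMap.seminorm 𝕜 k l (smulLeftCLM F (fun x ↦ χ (ε⁻¹ • x)) f))
      (𝓝[>] 0) (𝓝 0) := by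
  obtain ⟨C, hC⟩ := exists_forall_seminorm_smulLeftCLM_comp_inv_smul_le χ hf k hl
  have hlim : Tendsto (fun ε : ℝ ↦ C * ε) (𝓝[>] 0) (𝓝 0) :=
    ((continuous_const_mul C).tendsto' 0 0 (mul_zero C)).mono_left nhdsWithin_le_nhds
  refine squeeze_zero' (.of_forall fun ε ↦ apply_nonneg _ _) ?_ hlim
  filter_upwards [Ioc_mem_nhdsGT one_pos] with ε hε using hC ε hε

theorem notMem_tsupport_sub_smulLeftCLM_comp_smul {χ : 𝓢(E, 𝕜)} (hχ : χ =ᶠ[𝓝 0] 1)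
    (f : 𝓢(E, F)) (c : ℝ) : 0 ∉ tsupport (f - smulLeftCLM F (fun x ↦ χ (c • x)) f) := by
  rw [notMem_tsupport_iff_eventuallyEq]
  have hc : Tendsto (fun x : E ↦ c • x) (𝓝 0) (𝓝 0) :=
    (continuous_const_smul c).tendsto' 0 0 (smul_zero c)
  filter_upwards [hc.eventually hχ] with x hx
  simp [smulLeftCLM_apply_apply (hasTemperateGrowth_comp_smul χ c), hx]

variable [FiniteDimensional ℝ E]

variable (𝕜 E) in
theorem exists_schwartzMap_eventuallyEq_one : ∃ χ : 𝓢(E, 𝕜), χ =ᶠ[𝓝 0] 1 := by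
  let b : ContDiffBump (0 : E) := ⟨1, 2, one_pos, one_lt_two⟩
  have hb : HasCompactSupport (fun x ↦ (b x : 𝕜)) :=
    b.hasCompactSupport.comp_left RCLike.ofReal_zero
  refine ⟨hb.toSchwartzMap ((RCLike.ofRealCLM (K := 𝕜)).contDiff.comp b.contDiff), ?_⟩
  filter_upwards [b.eventuallyEq_one] with x hx
  change (b x : 𝕜) = 1
  rw [hx, Pi.one_apply, RCLike.ofReal_one]

theorem exists_forall_eq_zero_of_isVanishingOn_compl_zero [NormedAddCommGroup V] [NormedSpace 𝕜 V]
    (G : 𝓢(E, F) →L[𝕜] V) (hG : IsVanishingOn G {0}ᶜ) :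
    ∃ N : ℕ, ∀ f : 𝓢(E, F), (∀ j ≤ N, iteratedFDeriv ℝ j f 0 = 0) → G f = 0 := by
  obtain ⟨s, C, -, hC⟩ := Seminorm.bound_of_continuous (schwartz_withSeminorms 𝕜 E F)
    ((normSeminorm 𝕜 V).comp G.toLinearMap) (continuous_norm.comp G.continuous)
  refine ⟨s.sup Prod.snd, fun f hf ↦ ?_⟩
  obtain ⟨χ, hχ⟩ := exists_schwartzMap_eventuallyEq_one 𝕜 E
  have hbound (ε : ℝ) : ‖G f‖ ≤ C * ∑ m ∈ s,
      schwartzSeminormFamily 𝕜 E F m (smulLeftCLM F (fun x ↦ χ (ε⁻¹ • x)) f) := by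
    set g := smulLeftCLM F (fun x ↦ χ (ε⁻¹ • x)) f
    have hfg : G f = G g := sub_eq_zero.1 <| by
      rw [← map_sub]
      exact hG _ (subset_compl_singleton_iff.2
        (notMem_tsupport_sub_smulLeftCLM_comp_smul hχ f ε⁻¹))
    calc
      ‖G f‖ = ‖G g‖ := by rw [hfg]
      _ ≤ C * s.sup (schwartzSeminormFamily 𝕜 E F) g := hC g
      _ ≤ C * ∑ m ∈ s, schwartzSeminormFamily 𝕜 E F m g := by
        gcongr
        simpa using Seminorm.finset_sup_le_sum (schwartzSeminormFamily 𝕜 E F) s g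
  have hlim : Tendsto (fun ε : ℝ ↦ C * ∑ m ∈ s,
      schwartzSeminormFamily 𝕜 E F m (smulLeftCLM F (fun x ↦ χ (ε⁻¹ • x)) f)) (𝓝[>] 0) (𝓝 0) := by
    simpa [schwartzSeminormFamily] using (tendsto_finsetSum s fun m hm ↦
      tendsto_seminorm_smulLeftCLM_comp_inv_smul χ hf m.1
        (Finset.le_sup (f := Prod.snd) hm)).const_mul (C : ℝ)
  exact norm_le_zero_iff.1 (ge_of_tendsto' hlim hbound)

end FiniteOrder

section Polynomial

open SchwartzMap Distribution
open scoped FourierTransform LineDeriv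

theorem hasTemperateGrowth_mvPolynomial_eval {ι E R : Type*} [NormedAddCommGroup E]
    [NormedSpace ℝ E] [NormedCommRing R] [NormedAlgebra ℝ R] {c : ι → E → R}
    (hc : ∀ i, (c i).HasTemperateGrowth) (p : MvPolynomial ι R) :
    (fun x ↦ MvPolynomial.eval (fun i ↦ c i x) p).HasTemperateGrowth := by
  induction p using MvPolynomial.induction_on with
  | C a => simp
  | add p q hp hq => simpa using! hp.add hq
  | mul_X p i hp => simpa using! hp.mul (hc i)

variable {ι : Type*} [Fintype ι] {F : Type*} [NormedAddCommGroup F] [NormedSpace ℂ F]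

theorem hasTemperateGrowth_mvPolynomial_eval_coord (p : MvPolynomial ι ℂ) :
    (fun x : EuclideanSpace ℝ ι ↦ MvPolynomial.eval (fun i ↦ (x i : ℂ)) p).HasTemperateGrowth :=
  hasTemperateGrowth_mvPolynomial_eval (fun i ↦ (Complex.ofRealCLM ∘L
    (EuclideanSpace.proj i : EuclideanSpace ℝ ι →L[ℝ] ℝ)).hasTemperateGrowth) p

variable (F) in
/-- Multiplication of Schwartz functions on `ℝ^ι` by complex polynomials in the coordinates, as an
action of the polynomial algebra. -/
noncomputable def polynomialSMulCLM : MvPolynomial ι ℂ →ₐ[ℂ]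
    (𝓢(EuclideanSpace ℝ ι, F) →L[ℂ] 𝓢(EuclideanSpace ℝ ι, F)) :=
  .ofLinearMap
    { toFun p := smulLeftCLM F fun x ↦ MvPolynomial.eval (fun i ↦ (x i : ℂ)) p
      map_add' p q := by
        simp only [map_add]
        exact smulLeftCLM_add (hasTemperateGrowth_mvPolynomial_eval_coord p)
          (hasTemperateGrowth_mvPolynomial_eval_coord q)
      map_smul' c p := by
        simp only [MvPolynomial.smul_eval]
        exact smulLeftCLM_smul (hasTemperateGrowth_mvPolynomial_eval_coord p) c }
    (by ext f x; simp)
    (fun p q ↦ by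
      simp only [LinearMap.coe_mk, AddHom.coe_mk, map_mul]
      exact (smulLeftCLM_compL_smulLeftCLM (hasTemperateGrowth_mvPolynomial_eval_coord p)
        (hasTemperateGrowth_mvPolynomial_eval_coord q)).symm)

theorem polynomialSMulCLM_apply_apply (p : MvPolynomial ι ℂ) (f : 𝓢(EuclideanSpace ℝ ι, F))
    (x : EuclideanSpace ℝ ι) :
    polynomialSMulCLM F p f x = MvPolynomial.eval (fun i ↦ (x i : ℂ)) p • f x :=
  smulLeftCLM_apply_apply (hasTemperateGrowth_mvPolynomial_eval_coord p) f x

theorem lineDerivOp_single_fourier (f : 𝓢(EuclideanSpace ℝ ι, F)) [DecidableEq ι] (i : ι) :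
    ∂_{EuclideanSpace.single i (1 : ℝ)} (𝓕 f) =
      (-(2 * Real.pi * Complex.I)) • 𝓕 (polynomialSMulCLM F (.X i) f) := by
  rw [lineDerivOp_fourier_eq, FourierTransform.fourier_smul]
  congr 2
  ext x
  have hcoord : (inner ℝ · (EuclideanSpace.single i (1 : ℝ))).HasTemperateGrowth := by fun_prop
  rw [smulLeftCLM_apply_apply hcoord]
  simp [polynomialSMulCLM_apply_apply, EuclideanSpace.inner_single_right]

theorem iteratedLineDerivOp_single_fourier [DecidableEq ι] (f : 𝓢(EuclideanSpace ℝ ι, F)) {j : ℕ}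
    (s : Fin j → ι) :
    ∂^{fun k ↦ EuclideanSpace.single (s k) (1 : ℝ)} (𝓕 f) =
      (-(2 * Real.pi * Complex.I)) ^ j • 𝓕 (polynomialSMulCLM F (∏ k, .X (s k)) f) := by
  induction j with
  | zero => simp
  | succ j ih =>
    calc
      _ = ∂_{EuclideanSpace.single (s 0) (1 : ℝ)}
          (∂^{fun k ↦ EuclideanSpace.single (Fin.tail s k) (1 : ℝ)} (𝓕 f)) :=
        LineDeriv.iteratedLineDerivOp_succ_left ..
      _ = _ := by
        rw [ih, LineDeriv.lineDerivOp_smul, lineDerivOp_single_fourier, smul_smul, ← pow_succ,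
          Fin.prod_univ_succ, map_mul]
        rfl

theorem tsupport_fourier_polynomialSMulCLM_subset (p : MvPolynomial ι ℂ)
    (f : 𝓢(EuclideanSpace ℝ ι, F)) :
    tsupport (𝓕 (polynomialSMulCLM F p f) : 𝓢(EuclideanSpace ℝ ι, F)) ⊆
      tsupport (𝓕 f : 𝓢(EuclideanSpace ℝ ι, F)) := by
  classical
  induction p using MvPolynomial.induction_on generalizing f with
  | C a =>
    have hC : polynomialSMulCLM F (.C a) f = a • f := by simp
    rw [hC, FourierTransform.fourier_smul]
    exact tsupport_smul_subset_right (fun _ ↦ a) _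
  | add p q hp hq =>
    rw [map_add, add_apply, FourierTransform.fourier_add]
    exact (tsupport_add _ _).trans (Set.union_subset (hp f) (hq f))
  | mul_X p i hp =>
    have hX : 𝓕 (polynomialSMulCLM F (.X i) f) =
        (-(2 * Real.pi * Complex.I))⁻¹ • ∂_{EuclideanSpace.single i (1 : ℝ)} (𝓕 f) := by
      rw [lineDerivOp_single_fourier, inv_smul_smul₀ (by simp [Real.pi_ne_zero])]
    calc
      tsupport (𝓕 (polynomialSMulCLM F (p * .X i) f) : 𝓢(EuclideanSpace ℝ ι, F)) ⊆
          tsupport (𝓕 (polynomialSMulCLM F (.X i) f) : 𝓢(EuclideanSpace ℝ ι, F)) := by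
        rw [map_mul]
        exact hp _
      _ ⊆ tsupport (∂_{EuclideanSpace.single i (1 : ℝ)} (𝓕 f) : 𝓢(EuclideanSpace ℝ ι, F)) := by
        rw [hX]
        exact tsupport_smul_subset_right (fun _ ↦ (-(2 * Real.pi * Complex.I))⁻¹) _
      _ ⊆ tsupport (𝓕 f : 𝓢(EuclideanSpace ℝ ι, F)) := tsupport_lineDerivOp_subset _ _

/-- The tempered distribution `φ ↦ ∫ x, p x * φ x` of a polynomial `p` in the coordinates of
`ℝ^ι`. -/
noncomputable def polynomialDistribution :
    MvPolynomial ι ℂ →ₗ[ℂ] WeakDual ℂ 𝓢(EuclideanSpace ℝ ι, ℂ) where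
  toFun p := StrongDual.toWeakDual (integralCLM ℂ volume ∘L polynomialSMulCLM ℂ p)
  map_add' p q := by simp only [map_add, ContinuousLinearMap.comp_add]
  map_smul' c p := by simp only [map_smul, ContinuousLinearMap.comp_smul, RingHom.id_apply]

theorem polynomialDistribution_apply (p : MvPolynomial ι ℂ) (φ : 𝓢(EuclideanSpace ℝ ι, ℂ)) :
    polynomialDistribution p φ =
      ∫ x : EuclideanSpace ℝ ι, MvPolynomial.eval (fun i ↦ (x i : ℂ)) p * φ x := by
  simp [polynomialDistribution, integralCLM_apply, polynomialSMulCLM_apply_apply]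

theorem polynomialDistribution_apply_eq_fourier_zero (p : MvPolynomial ι ℂ)
    (φ : 𝓢(EuclideanSpace ℝ ι, ℂ)) :
    polynomialDistribution p φ = 𝓕 (polynomialSMulCLM ℂ p φ) 0 := by
  simp [polynomialDistribution, integralCLM_apply, fourier_coe, Real.fourier_eq]

theorem polynomialDistribution_apply_eq_zero_of_notMem_tsupport_fourier (p : MvPolynomial ι ℂ)
    {φ : 𝓢(EuclideanSpace ℝ ι, ℂ)} (hφ : 0 ∉ tsupport (𝓕 φ : 𝓢(EuclideanSpace ℝ ι, ℂ))) :
    polynomialDistribution p φ = 0 := by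
  rw [polynomialDistribution_apply_eq_fourier_zero]
  exact image_eq_zero_of_notMem_tsupport
    (Set.notMem_subset (tsupport_fourier_polynomialSMulCLM_subset p φ) hφ)

theorem iteratedFDeriv_fourier_zero_eq_zero {φ : 𝓢(EuclideanSpace ℝ ι, ℂ)} {j : ℕ}
    (hφ : ∀ s : Fin j → ι, polynomialDistribution (∏ k, .X (s k)) φ = 0) :
    iteratedFDeriv ℝ j (𝓕 φ : 𝓢(EuclideanSpace ℝ ι, ℂ)) 0 = 0 := by
  classical
  apply ContinuousMultilinearMap.toMultilinearMap_injective
  refine Module.Basis.ext_multilinear (fun _ ↦ (EuclideanSpace.basisFun ι ℝ).toBasis) fun s ↦ ?_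
  simpa [iteratedLineDerivOp_eq_iteratedFDeriv, ← polynomialDistribution_apply_eq_fourier_zero,
    hφ] using DFunLike.congr_fun (iteratedLineDerivOp_single_fourier φ s) 0

theorem exists_forall_eq_zero_of_iteratedFDeriv_fourier
    {T : WeakDual ℂ 𝓢(EuclideanSpace ℝ ι, ℂ)}
    (hF : ∀ φ, (∀ p, polynomialDistribution p φ = 0) → T φ = 0) :
    ∃ N : ℕ, ∀ φ : 𝓢(EuclideanSpace ℝ ι, ℂ),
      (∀ j ≤ N, iteratedFDeriv ℝ j (𝓕 φ : 𝓢(EuclideanSpace ℝ ι, ℂ)) 0 = 0) → T φ = 0 := by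
  have hsupp : IsVanishingOn (T.toStrongDual ∘L (FourierTransform.fourierCLE ℂ
      𝓢(EuclideanSpace ℝ ι, ℂ)).symm.toContinuousLinearMap) {0}ᶜ := by
    intro u hu
    refine hF _ fun p ↦ polynomialDistribution_apply_eq_zero_of_notMem_tsupport_fourier p ?_
    simpa using hu
  obtain ⟨N, hN⟩ := exists_forall_eq_zero_of_isVanishingOn_compl_zero _ hsupp
  exact ⟨N, fun φ hφ ↦ by simpa using hN (𝓕 φ) hφ⟩

theorem mem_range_polynomialDistribution_iff {T : WeakDual ℂ 𝓢(EuclideanSpace ℝ ι, ℂ)} :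
    T ∈ LinearMap.range polynomialDistribution ↔
      ∀ φ, (∀ p, polynomialDistribution p φ = 0) → T φ = 0 := by
  refine ⟨?_, fun hF ↦ ?_⟩
  · rintro ⟨p, rfl⟩ φ hφ
    exact hφ p
  obtain ⟨N, hN⟩ := exists_forall_eq_zero_of_iteratedFDeriv_fourier hF
  let q (s : Σ j : Fin (N + 1), Fin j → ι) : MvPolynomial ι ℂ := ∏ k, .X (s.2 k)
  have hker : ⨅ s, (polynomialDistribution (q s)).toStrongDual.toLinearMap.ker ≤
      T.toStrongDual.toLinearMap.ker := by
    intro φ hφ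
    have hq : ∀ s, polynomialDistribution (q s) φ = 0 := by simpa using hφ
    exact hN φ fun j hj ↦ iteratedFDeriv_fourier_zero_eq_zero fun s ↦
      hq ⟨⟨j, Nat.lt_succ_of_le hj⟩, s⟩
  obtain ⟨c, hc⟩ := (Submodule.mem_span_range_iff_exists_fun ℂ).1
    (mem_span_of_iInf_ker_le_ker hker)
  refine ⟨∑ s, c s • q s, WeakDual.toStrongDual.injective (ContinuousLinearMap.coe_injective ?_)⟩
  simpa using! hc

theorem isClosed_range_polynomialDistribution :
    IsClosed (LinearMap.range (polynomialDistribution (ι := ι)) :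
      Set (WeakDual ℂ 𝓢(EuclideanSpace ℝ ι, ℂ))) := by
  have hrange : (LinearMap.range (polynomialDistribution (ι := ι)) :
      Set (WeakDual ℂ 𝓢(EuclideanSpace ℝ ι, ℂ))) =
        ⋂ φ, ⋂ (_ : ∀ p, polynomialDistribution p φ = 0), {T | T φ = 0} := by
    ext T
    simp only [SetLike.mem_coe, mem_range_polynomialDistribution_iff, Set.mem_iInter,
      Set.mem_ofPred_eq]
  rw [hrange]
  exact isClosed_iInter fun φ ↦ isClosed_iInter fun _ ↦
    isClosed_eq (WeakDual.eval_continuous φ) continuous_const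

end Polynomial

/-- the set of polynomial tempered distributions (polynomials regarded as
elements of `𝒮′(ℝⁿ)` via integration against Schwartz functions) is a closed linear
subspace of `𝒮′(ℝⁿ)` with the weak-* topology. -/
theorem polynomial_distributions_closed_subspace (n : ℕ) :
    ∃ P : Submodule ℂ (WeakDual ℂ (SchwartzMap (EuclideanSpace ℝ (Fin n)) ℂ)),
      (P : Set (WeakDual ℂ (SchwartzMap (EuclideanSpace ℝ (Fin n)) ℂ))) =
        {F | ∃ p : MvPolynomial (Fin n) ℂ,
          ∀ φ : SchwartzMap (EuclideanSpace ℝ (Fin n)) ℂ,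
            F φ = ∫ x : EuclideanSpace ℝ (Fin n),
              MvPolynomial.eval (fun i => (x i : ℂ)) p * φ x} ∧
      IsClosed (P : Set (WeakDual ℂ (SchwartzMap (EuclideanSpace ℝ (Fin n)) ℂ))) := by
  refine ⟨LinearMap.range polynomialDistribution, ?_, isClosed_range_polynomialDistribution⟩
  ext F
  simp [DFunLike.ext_iff, polynomialDistribution_apply, eq_comm]
end

section
/- A tempered distribution f ∈ 𝒮′(ℝⁿ) vanishes on the Lizorkin space 𝒮_∞(ℝⁿ) (i.e., ⟨f, φ⟩ = 0 for every φ ∈ 𝒮(ℝⁿ) all of whose moments ∫_{ℝⁿ} x^α φ(x) dx vanish) if and only if f is a polynomial, i.e., there is a polynomial p on ℝⁿ with ⟨f, φ⟩ = ∫_{ℝⁿ} p(x) φ(x) dx for all φ ∈ 𝒮(ℝⁿ). -/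
open MeasureTheory

/-!
Put `G = F ∘ 𝓕⁻¹`. The derivatives of `𝓕 φ` at the origin are, up to nonzero constants, the moments
of `φ`, so if `F` vanishes on the Lizorkin space then `G` is supported at the origin. By continuity
`G` is controlled by finitely many Schwartz seminorms. If `ψ` vanishes at the origin to the largest
order `N` of derivative occurring in them, then its cutoffs to the balls of radius `2ε` are `O(ε)`
in these seminorms while `G` does not distinguish them from `ψ`; hence `G ψ = 0`. In terms of `F`:
it vanishes on the common kernel of the finite-dimensional space of functionals given by the
polynomials of degree at most `N`, and therefore belongs to that space.
-/

open Filter Set MvPolynomial Distribution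
open scoped FourierTransform SchwartzMap Topology RealInnerProductSpace

section Flat

variable {𝕜 E V W : Type*} [RCLike 𝕜] [NormedAddCommGroup E] [NormedSpace ℝ E]
  [NormedAddCommGroup V] [NormedSpace ℝ V] [NormedSpace 𝕜 V] [SMulCommClass ℝ 𝕜 V]
  [NormedAddCommGroup W] [NormedSpace 𝕜 W]

/-- `f` is flat to order `N` at the origin: all its derivatives of order at most `N` (including
`f` itself) vanish there. For the Fourier transform of a Schwartz function this expresses that the
moments of order at most `N` vanish. -/
def FlatAtZero (N : ℕ) (f : E → V) : Prop :=
  ∀ l ≤ N, iteratedFDeriv ℝ l f 0 = 0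

theorem flatAtZero_of_eventuallyEq_zero {f : E → V} (hf : f =ᶠ[𝓝 0] 0) (N : ℕ) :
    FlatAtZero N f := fun l _ => by
  simpa using (hf.iteratedFDeriv ℝ l).eq_of_nhds

theorem FlatAtZero.norm_iteratedFDeriv_le {f : E → V} {N : ℕ} {C : ℝ} (hf : FlatAtZero N f)
    (hsmooth : ContDiff ℝ (N + 1 : ℕ) f) (hC : ∀ x, ‖iteratedFDeriv ℝ (N + 1) f x‖ ≤ C)
    {m r : ℕ} (hmr : m + r = N + 1) (x : E) :
    ‖iteratedFDeriv ℝ m f x‖ ≤ C * ‖x‖ ^ r := by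
  induction r generalizing m x with
  | zero =>
    obtain rfl : m = N + 1 := hmr
    simpa using hC x
  | succ r ih =>
    have hdiff : Differentiable ℝ (iteratedFDeriv ℝ m f) :=
      hsmooth.differentiable_iteratedFDeriv (by exact_mod_cast (by omega : m < N + 1))
    have hC0 : 0 ≤ C := (norm_nonneg _).trans (hC 0)
    have hderiv : ∀ y ∈ Metric.closedBall (0 : E) ‖x‖,
        ‖fderiv ℝ (iteratedFDeriv ℝ m f) y‖ ≤ C * ‖x‖ ^ r := fun y hy => by
      rw [norm_fderiv_iteratedFDeriv]
      refine (ih (by omega) y).trans ?_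
      gcongr
      simpa using hy
    have hmvt := (convex_closedBall (0 : E) ‖x‖).norm_image_sub_le_of_norm_fderiv_le
      (fun y _ => hdiff y) hderiv (x := 0) (y := x) (by simp) (by simp)
    rw [hf m (by omega), sub_zero, sub_zero] at hmvt
    rwa [pow_succ, ← mul_assoc]

theorem norm_pow_mul_iteratedFDeriv_dilate_le (χ : 𝓢(E, V)) {j p : ℕ} (hjp : j < p) {ε : ℝ}
    (hε : 0 < ε) (hε1 : ε ≤ 1) (x : E) :
    ‖x‖ ^ p * ‖iteratedFDeriv ℝ j (fun x => χ (ε⁻¹ • x)) x‖ ≤ SchwartzMap.seminorm ℝ p j χ * ε := by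
  obtain ⟨r, rfl⟩ : ∃ r, p = j + (r + 1) := ⟨p - j - 1, by omega⟩
  set y := ε⁻¹ • x with hy
  have hx : ‖x‖ = ε * ‖y‖ := by
    rw [hy, norm_smul, norm_inv, Real.norm_of_nonneg hε.le, mul_inv_cancel_left₀ hε.ne']
  rw [iteratedFDeriv_comp_const_smul _ (χ.smooth j), norm_smul, norm_pow, norm_inv,
    Real.norm_of_nonneg hε.le, ← hy]
  calc ‖x‖ ^ (j + (r + 1)) * (ε⁻¹ ^ j * ‖iteratedFDeriv ℝ j χ y‖)
      = ‖y‖ ^ (j + (r + 1)) * ‖iteratedFDeriv ℝ j χ y‖ * ε ^ (r + 1) := by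
        rw [hx, mul_pow, pow_add ε, inv_pow]
        field_simp
    _ ≤ SchwartzMap.seminorm ℝ (j + (r + 1)) j χ * ε := by
        gcongr
        · exact χ.le_seminorm ℝ _ _ y
        · exact pow_le_of_le_one hε.le hε1 r.succ_ne_zero

theorem hasTemperateGrowth_dilate (χ : 𝓢(E, V)) (ε : ℝ) :
    (fun x => χ (ε⁻¹ • x)).HasTemperateGrowth :=
  χ.hasTemperateGrowth.comp (ε⁻¹ • ContinuousLinearMap.id ℝ E).hasTemperateGrowth

theorem FlatAtZero.exists_seminorm_smul_dilate_le {ψ : 𝓢(E, V)} {N : ℕ} (hψ : FlatAtZero N ψ)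
    (χ : 𝓢(E, ℝ)) (k : ℕ) {l : ℕ} (hl : l ≤ N) :
    ∃ K, ∀ ε : ℝ, 0 < ε → ε ≤ 1 →
      SchwartzMap.seminorm 𝕜 k l (SchwartzMap.smulLeftCLM V (fun x => χ (ε⁻¹ • x)) ψ) ≤ K * ε := by
  set C := SchwartzMap.seminorm ℝ 0 (N + 1) ψ
  have hflat : ∀ j ≤ l, ∀ x,
      ‖iteratedFDeriv ℝ (l - j) ψ x‖ ≤ C * ‖x‖ ^ (N + 1 - (l - j)) := fun j hj =>
    hψ.norm_iteratedFDeriv_le (ψ.smooth _) (ψ.norm_iteratedFDeriv_le_seminorm ℝ _) (by omega)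
  let p : ℕ → ℕ := fun j => k + (N + 1 - (l - j))
  refine ⟨∑ j ∈ Finset.range (l + 1), l.choose j * C * SchwartzMap.seminorm ℝ (p j) j χ,
    fun ε hε hε1 => SchwartzMap.seminorm_le_bound 𝕜 k l _ (by positivity) fun x => ?_⟩
  have hdilate : ContDiff ℝ l fun x => χ (ε⁻¹ • x) :=
    (χ.smooth l).comp (contDiff_const_smul ε⁻¹)
  rw [SchwartzMap.smulLeftCLM_apply (hasTemperateGrowth_dilate χ ε)]
  refine (mul_le_mul_of_nonneg_left (norm_iteratedFDeriv_smul_le hdilate (ψ.smooth l) x le_rfl)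
    (by positivity)).trans ?_
  rw [Finset.mul_sum, Finset.sum_mul]
  refine Finset.sum_le_sum fun j hj => ?_
  have hjl : j ≤ l := Finset.mem_range_succ_iff.mp hj
  have hjp : j < k + (N + 1 - (l - j)) := by omega
  calc ‖x‖ ^ k * (l.choose j * ‖iteratedFDeriv ℝ j (fun x => χ (ε⁻¹ • x)) x‖
        * ‖iteratedFDeriv ℝ (l - j) ψ x‖)
      ≤ ‖x‖ ^ k * (l.choose j * ‖iteratedFDeriv ℝ j (fun x => χ (ε⁻¹ • x)) x‖
        * (C * ‖x‖ ^ (N + 1 - (l - j)))) := by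
        gcongr
        exact hflat j hjl x
    _ = l.choose j * C * (‖x‖ ^ p j * ‖iteratedFDeriv ℝ j (fun x => χ (ε⁻¹ • x)) x‖) := by
        rw [pow_add]
        ring
    _ ≤ l.choose j * C * (SchwartzMap.seminorm ℝ (p j) j χ * ε) :=
        mul_le_mul_of_nonneg_left (norm_pow_mul_iteratedFDeriv_dilate_le χ hjp hε hε1 x)
          (by positivity)
    _ = l.choose j * C * SchwartzMap.seminorm ℝ (p j) j χ * ε := by ring

theorem FlatAtZero.tendsto_seminorm_smul_dilate {ψ : 𝓢(E, V)} {N : ℕ} (hψ : FlatAtZero N ψ)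
    (χ : 𝓢(E, ℝ)) (k : ℕ) {l : ℕ} (hl : l ≤ N) :
    Tendsto (fun ε : ℝ =>
        SchwartzMap.seminorm 𝕜 k l (SchwartzMap.smulLeftCLM V (fun x => χ (ε⁻¹ • x)) ψ))
      (𝓝[>] 0) (𝓝 0) := by
  obtain ⟨K, hK⟩ := hψ.exists_seminorm_smul_dilate_le (𝕜 := 𝕜) χ k hl
  have hlim : Tendsto (fun ε : ℝ => K * ε) (𝓝[>] 0) (𝓝 0) := by
    simpa using ((continuous_const_mul K).tendsto 0).mono_left nhdsWithin_le_nhds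
  refine squeeze_zero' (.of_forall fun _ => apply_nonneg _ _) ?_ hlim
  filter_upwards [Ioc_mem_nhdsGT zero_lt_one] with ε hε
  exact hK ε hε.1 hε.2

theorem notMem_tsupport_sub_smul_dilate {χ : 𝓢(E, ℝ)} (hχ : χ =ᶠ[𝓝 0] 1) (ψ : 𝓢(E, V)) (ε : ℝ) :
    0 ∉ tsupport (ψ - SchwartzMap.smulLeftCLM V (fun x => χ (ε⁻¹ • x)) ψ) := by
  have hdilate : Tendsto (fun x : E => ε⁻¹ • x) (𝓝 0) (𝓝 0) :=
    (continuous_const_smul ε⁻¹).tendsto' 0 0 (smul_zero _)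
  rw [notMem_tsupport_iff_eventuallyEq]
  filter_upwards [hdilate.eventually hχ] with x hx
  simp [SchwartzMap.smulLeftCLM_apply_apply (hasTemperateGrowth_dilate χ ε), hx]

variable (E) in
theorem exists_schwartz_eventuallyEq_one [FiniteDimensional ℝ E] :
    ∃ χ : 𝓢(E, ℝ), χ =ᶠ[𝓝 0] 1 :=
  let b : ContDiffBump (0 : E) := default
  ⟨b.hasCompactSupport.toSchwartzMap b.contDiff, b.eventuallyEq_one⟩

theorem exists_eq_zero_of_flatAtZero_of_isVanishingOn [FiniteDimensional ℝ E]
    (G : 𝓢(E, V) →L[𝕜] W) (hG : IsVanishingOn G {0}ᶜ) :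
    ∃ N, ∀ ψ : 𝓢(E, V), FlatAtZero N ψ → G ψ = 0 := by
  obtain ⟨s, C, -, hC⟩ := Seminorm.bound_of_continuous (schwartz_withSeminorms 𝕜 E V)
    ((normSeminorm 𝕜 W).comp (G : 𝓢(E, V) →ₗ[𝕜] W)) G.continuous.norm
  obtain ⟨χ, hχ⟩ := exists_schwartz_eventuallyEq_one E
  refine ⟨s.sup Prod.snd, fun ψ hψ => ?_⟩
  let η : ℝ → 𝓢(E, V) := fun ε => SchwartzMap.smulLeftCLM V (fun x => χ (ε⁻¹ • x)) ψ
  have hGη : ∀ ε, G (η ε) = G ψ := fun ε => by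
    rw [eq_comm, ← sub_eq_zero, ← map_sub]
    exact hG _ (subset_compl_singleton_iff.mpr (notMem_tsupport_sub_smul_dilate hχ ψ ε))
  have hbound : ∀ ε, ‖G (η ε)‖ ≤ C * ∑ i ∈ s, SchwartzMap.seminorm 𝕜 i.1 i.2 (η ε) := fun ε => by
    refine (hC (η ε)).trans (mul_le_mul_of_nonneg_left ?_ C.2)
    refine (Seminorm.finset_sup_le_sum _ s (η ε)).trans_eq ?_
    rw [← FunLike.coeAddMonoidHom_apply, map_sum, Finset.sum_apply]
    rfl
  have hlim : Tendsto (fun ε => C * ∑ i ∈ s, SchwartzMap.seminorm 𝕜 i.1 i.2 (η ε))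
      (𝓝[>] 0) (𝓝 0) := by
    simpa using (tendsto_finsetSum s fun i hi =>
      hψ.tendsto_seminorm_smul_dilate (𝕜 := 𝕜) χ i.1 (Finset.le_sup (f := Prod.snd) hi)).const_mul
        (C : ℝ)
  have hGψ : Tendsto (fun _ : ℝ => G ψ) (𝓝[>] 0) (𝓝 0) := by
    simpa only [hGη] using squeeze_zero_norm hbound hlim
  exact tendsto_nhds_unique tendsto_const_nhds hGψ

end Flat

theorem exists_prod_X_eq_monomial {σ R : Type*} [CommSemiring R] (α : σ →₀ ℕ) :
    ∃ s : Fin α.degree → σ, ∏ j, (X (s j) : MvPolynomial σ R) = monomial α 1 := by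
  have hcard : Fintype.card (Σ i : α.support, Fin (α i)) = α.degree := by
    simp [Finsupp.degree_apply, Finset.sum_attach _ α]
  let e := Fintype.equivFinOfCardEq hcard
  refine ⟨fun j => (e.symm j).1, ?_⟩
  rw [Equiv.prod_comp e.symm fun a => (X a.1 : MvPolynomial σ R), Fintype.prod_sigma,
    ← prod_X_pow_eq_monomial]
  simp only [Finset.prod_const, Finset.card_fin]
  exact Finset.prod_coe_sort α.support fun i => X i ^ α i

section Polynomial

variable {ι E V : Type*} [Fintype ι] [NormedAddCommGroup E] [InnerProductSpace ℝ E]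
  [NormedAddCommGroup V] [NormedSpace ℂ V]

theorem hasTemperateGrowth_eval_repr (b : OrthonormalBasis ι ℝ E) (p : MvPolynomial ι ℂ) :
    (fun x => eval (fun i => (b.repr x i : ℂ)) p).HasTemperateGrowth := by
  induction p using MvPolynomial.induction_on with
  | C a => simp
  | add p q hp hq => simpa only [map_add] using! hp.add hq
  | mul_X p i hp =>
    have hcoord : (fun x => (b.repr x i : ℂ)).HasTemperateGrowth := by
      simp only [b.repr_apply_apply]
      fun_prop
    simpa only [map_mul, eval_X] using! hp.mul hcoord

variable [FiniteDimensional ℝ E] [MeasurableSpace E] [BorelSpace E]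

theorem iteratedFDeriv_fourier_zero_apply (φ : 𝓢(E, V)) {l : ℕ} (m : Fin l → E) :
    iteratedFDeriv ℝ l (𝓕 φ : 𝓢(E, V)) 0 m =
      (-(2 * Real.pi * Complex.I)) ^ l • ∫ x, (∏ j, ⟪x, m j⟫) • φ x := by
  have hint : ∀ k : ℕ, Integrable fun x => ‖x‖ ^ k * ‖φ x‖ := φ.integrable_pow_mul volume
  have hmeas : AEStronglyMeasurable φ := φ.continuous.aestronglyMeasurable
  rw [SchwartzMap.fourier_coe, Real.iteratedFDeriv_fourier (N := ⊤) (fun k _ => hint k) hmeas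
    le_top, Real.fourier_eq]
  simp only [inner_zero_right, neg_zero, AddChar.map_zero_eq_one, one_smul]
  rw [ContinuousMultilinearMap.integral_apply
    (VectorFourier.integrable_fourierPowSMulRight _ (hint l) hmeas)]
  simp only [VectorFourier.fourierPowSMulRight_apply]
  exact integral_smul _ _

variable (b : OrthonormalBasis ι ℝ E)

theorem integrable_eval_repr_mul (p : MvPolynomial ι ℂ) (φ : 𝓢(E, ℂ)) :
    Integrable fun x => eval (fun i => (b.repr x i : ℂ)) p * φ x := by
  simpa only [SchwartzMap.smulLeftCLM_apply (hasTemperateGrowth_eval_repr b p), smul_eq_mul] using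
    (SchwartzMap.smulLeftCLM ℂ (fun x => eval (fun i => (b.repr x i : ℂ)) p) φ).integrable

/-- The pairing `∫ p(x) φ(x) dx` of a polynomial in the coordinates of an orthonormal basis with a
Schwartz function; its values at fixed `p` are the tempered distributions that are polynomials. -/
noncomputable def polynomialPairing : MvPolynomial ι ℂ →ₗ[ℂ] 𝓢(E, ℂ) →ₗ[ℂ] ℂ :=
  LinearMap.mk₂ ℂ (fun p φ => ∫ x, eval (fun i => (b.repr x i : ℂ)) p * φ x)
    (fun p q φ => by
      simp only [map_add, add_mul]
      exact integral_add (integrable_eval_repr_mul b p φ) (integrable_eval_repr_mul b q φ))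
    (fun c p φ => by
      simp only [smul_eval, mul_assoc, smul_eq_mul]
      exact integral_const_mul c _)
    (fun p φ ψ => by
      simp only [add_apply, mul_add]
      exact integral_add (integrable_eval_repr_mul b p φ) (integrable_eval_repr_mul b p ψ))
    (fun c p φ => by
      simp only [smul_apply, mul_left_comm _ c, smul_eq_mul]
      exact integral_const_mul c _)

theorem polynomialPairing_apply (p : MvPolynomial ι ℂ) (φ : 𝓢(E, ℂ)) :
    polynomialPairing b p φ = ∫ x, eval (fun i => (b.repr x i : ℂ)) p * φ x :=
  rfl

theorem polynomialPairing_eq_sum (p : MvPolynomial ι ℂ) (φ : 𝓢(E, ℂ)) :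
    polynomialPairing b p φ =
      ∑ α ∈ p.support, p.coeff α * polynomialPairing b (monomial α 1) φ := by
  have hp : p = ∑ α ∈ p.support, p.coeff α • monomial α 1 := by
    simpa only [smul_monomial, smul_eq_mul, mul_one] using p.as_sum
  conv_lhs => rw [hp]
  simp only [map_sum, map_smul, LinearMap.sum_apply, LinearMap.smul_apply, smul_eq_mul]

theorem polynomialPairing_eq_zero_iff_moments (φ : 𝓢(E, ℂ)) :
    (∀ p, polynomialPairing b p φ = 0) ↔
      ∀ α : ι → ℕ, ∫ x, (∏ i, (b.repr x i : ℂ) ^ α i) * φ x = 0 := by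
  constructor
  · intro h α
    simpa [polynomialPairing_apply] using h (∏ i, X i ^ α i)
  · intro h p
    rw [polynomialPairing_eq_sum]
    refine Finset.sum_eq_zero fun α _ => ?_
    simp [polynomialPairing_apply, eval_monomial, Finsupp.prod_fintype, h]

theorem iteratedFDeriv_fourier_zero_eq_zero_iff (φ : 𝓢(E, ℂ)) (l : ℕ) :
    iteratedFDeriv ℝ l (𝓕 φ : 𝓢(E, ℂ)) 0 = 0 ↔
      ∀ s : Fin l → ι, polynomialPairing b (∏ j, X (s j)) φ = 0 := by
  have hmoment : ∀ s : Fin l → ι,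
      iteratedFDeriv ℝ l (𝓕 φ : 𝓢(E, ℂ)) 0 (fun j => b (s j)) =
        (-(2 * Real.pi * Complex.I)) ^ l * polynomialPairing b (∏ j, X (s j)) φ := fun s => by
    simp [iteratedFDeriv_fourier_zero_apply, polynomialPairing_apply, b.repr_apply_apply,
      real_inner_comm (b _)]
  have hconst : (-(2 * Real.pi * Complex.I)) ^ l ≠ 0 :=
    pow_ne_zero _ (neg_ne_zero.mpr Complex.two_pi_I_ne_zero)
  constructor
  · intro h s
    simpa [h, hconst] using (hmoment s).symm
  · intro h
    refine ContinuousMultilinearMap.toMultilinearMap_injective <|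
      Module.Basis.ext_multilinear (fun _ => b.toBasis) fun s => ?_
    simpa [h s] using hmoment s

theorem flatAtZero_fourier_iff (φ : 𝓢(E, ℂ)) (N : ℕ) :
    FlatAtZero N (𝓕 φ : 𝓢(E, ℂ)) ↔ ∀ p, p.totalDegree ≤ N → polynomialPairing b p φ = 0 := by
  constructor
  · intro h p hp
    rw [polynomialPairing_eq_sum]
    refine Finset.sum_eq_zero fun α hα => ?_
    obtain ⟨s, hs⟩ := exists_prod_X_eq_monomial (R := ℂ) α
    have hdeg : α.degree ≤ N := (le_totalDegree hα).trans hp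
    rw [← hs, (iteratedFDeriv_fourier_zero_eq_zero_iff b φ _).mp (h _ hdeg) s, mul_zero]
  · intro h l hl
    refine (iteratedFDeriv_fourier_zero_eq_zero_iff b φ l).mpr fun s => h _ ?_
    calc (∏ j, (X (s j) : MvPolynomial ι ℂ)).totalDegree
        ≤ ∑ j, (X (s j) : MvPolynomial ι ℂ).totalDegree := totalDegree_finsetProd _ _
      _ = l := by simp
      _ ≤ N := hl

theorem exists_polynomialPairing_of_isVanishingOn (G : 𝓢(E, ℂ) →L[ℂ] ℂ)
    (hG : IsVanishingOn G {0}ᶜ) : ∃ p, ∀ φ, G (𝓕 φ) = polynomialPairing b p φ := by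
  obtain ⟨N, hN⟩ := exists_eq_zero_of_flatAtZero_of_isVanishingOn G hG
  let GF : Module.Dual ℂ 𝓢(E, ℂ) :=
    G.toLinearMap ∘ₗ (FourierTransform.fourierCLE ℂ 𝓢(E, ℂ)).toLinearMap
  let P : Submodule ℂ (Module.Dual ℂ 𝓢(E, ℂ)) :=
    (restrictTotalDegree ι ℂ N).map (polynomialPairing b)
  have hGF : GF ∈ P.dualCoannihilator.dualAnnihilator := by
    refine (Submodule.mem_dualAnnihilator _).mpr fun φ hφ => hN _ ?_
    exact (flatAtZero_fourier_iff b φ N).mpr fun p hp => (Submodule.mem_dualCoannihilator φ).mp hφ _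
      (Submodule.mem_map_of_mem ((mem_restrictTotalDegree ι N p).mpr hp))
  rw [Subspace.dualCoannihilator_dualAnnihilator_eq] at hGF
  obtain ⟨p, -, hp⟩ := hGF
  exact ⟨p, fun φ => (LinearMap.congr_fun hp φ).symm⟩

theorem vanishes_on_lizorkin_iff_polynomial_general (F : 𝓢(E, ℂ) →L[ℂ] ℂ) :
    (∀ φ : 𝓢(E, ℂ), (∀ α : ι → ℕ, ∫ x, (∏ i, (b.repr x i : ℂ) ^ α i) * φ x = 0) → F φ = 0) ↔
      ∃ p : MvPolynomial ι ℂ, ∀ φ : 𝓢(E, ℂ),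
        F φ = ∫ x, eval (fun i => (b.repr x i : ℂ)) p * φ x := by
  simp only [← polynomialPairing_eq_zero_iff_moments, ← polynomialPairing_apply]
  constructor
  · intro hF
    let 𝓕e := FourierTransform.fourierCLE ℂ 𝓢(E, ℂ)
    have hsupp : IsVanishingOn (F ∘L 𝓕e.symm.toContinuousLinearMap) {0}ᶜ := fun ψ hψ => by
      obtain ⟨φ, rfl⟩ := 𝓕e.surjective ψ
      have hzero : (𝓕 φ : 𝓢(E, ℂ)) =ᶠ[𝓝 0] 0 :=
        notMem_tsupport_iff_eventuallyEq.mp (subset_compl_singleton_iff.mp hψ)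
      have hFφ : F φ = 0 := hF φ fun p =>
        (flatAtZero_fourier_iff b φ _).mp (flatAtZero_of_eventuallyEq_zero hzero _) p le_rfl
      simpa using hFφ
    obtain ⟨p, hp⟩ := exists_polynomialPairing_of_isVanishingOn b _ hsupp
    exact ⟨p, fun φ => by simpa [𝓕e] using hp φ⟩
  · rintro ⟨p, hp⟩ φ hφ
    rw [hp, hφ]

end Polynomial

/-- a tempered distribution `F` vanishes on the Lizorkin space `𝒮_∞(ℝⁿ)`
(the Schwartz functions all of whose moments vanish) if and only if `F` is (integration
against) a polynomial. -/
theorem vanishes_on_lizorkin_iff_polynomial (n : ℕ)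
    (F : SchwartzMap (EuclideanSpace ℝ (Fin n)) ℂ →L[ℂ] ℂ) :
    (∀ φ : SchwartzMap (EuclideanSpace ℝ (Fin n)) ℂ,
        (∀ α : Fin n → ℕ,
          ∫ x : EuclideanSpace ℝ (Fin n), (∏ i, (x i : ℂ) ^ α i) * φ x = 0) →
        F φ = 0) ↔
      ∃ p : MvPolynomial (Fin n) ℂ,
        ∀ φ : SchwartzMap (EuclideanSpace ℝ (Fin n)) ℂ,
          F φ = ∫ x : EuclideanSpace ℝ (Fin n),
            MvPolynomial.eval (fun i => (x i : ℂ)) p * φ x :=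
  vanishes_on_lizorkin_iff_polynomial_general (EuclideanSpace.basisFun (Fin n) ℝ) F
end
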